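/- Let F : T → T be a polynomial-like branched covering of a simplicial tree with local degree function deg and global degree D = deg(F). Then: (a) the total number of critical points of F counted with multiplicity is D − 1, that is, Σ_x m(x) = D − 1, where x ranges over all vertices of T together with all ends in ∂T ∖ {∞} (only finitely many terms are nonzero); and (b) for every edge e ∈ E(T), deg(e) equals one plus the sum of m(x) over all vertices and ends x lying below e. -/

import Mathlib

open SimpleGraph Function Opposite

/-- A locally finite simplicial tree together with a self-map that is a
branched covering: a simplicial map (edges map onto edges) such that the
induced map on edges adjacent to any vertex is surjective onto the edges
adjacent to the image vertex, and every vertex has finitely many preimages. -/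
structure TreeDyn (V : Type) where
  G : SimpleGraph V
  isTree : G.IsTree
  locFin : ∀ v : V, (G.neighborSet v).Finite
  F : V → V
  adjMap : ∀ ⦃v w : V⦄, G.Adj v w → G.Adj (F v) (F w)
  edgeSurj : ∀ ⦃v w' : V⦄, G.Adj (F v) w' → ∃ w : V, G.Adj v w ∧ F w = w'
  finFibers : ∀ v' : V, {v : V | F v = v'}.Finite

namespace TreeDyn

variable {V : Type}

/-- A local degree function for the branched covering `T.F`: positive on
vertices and edges (edges adjacent to `v` are recorded by their other
endpoint), symmetric on edges, satisfying the Riemann–Hurwitz style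
inequality `2 deg(v) - 2 ≥ Σ (deg e - 1)` at each vertex, and the local
equality `deg v = Σ {deg e' : e' adjacent to v, F(e') = F(e)}` for each
edge `e` adjacent to `v`. -/
def IsLocalDeg (T : TreeDyn V) (dV : V → ℕ) (dE : V → V → ℕ) : Prop :=
  (∀ v w : V, dE v w = dE w v) ∧
  (∀ v : V, 0 < dV v) ∧
  (∀ ⦃v w : V⦄, T.G.Adj v w → 0 < dE v w) ∧
  (∀ v : V, (∑ᶠ w ∈ T.G.neighborSet v, (dE v w - 1)) + 2 ≤ 2 * dV v) ∧
  (∀ ⦃v w : V⦄, T.G.Adj v w →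
    dV v = ∑ᶠ w' ∈ {w' : V | T.G.Adj v w' ∧ T.F w' = T.F w}, dE v w')

/-- `x` and `y` are in the same grand orbit if `F^[n] x = F^[m] y` for some `n, m > 0`. -/
def GrandOrbit (T : TreeDyn V) (x y : V) : Prop :=
  ∃ n m : ℕ, 0 < n ∧ 0 < m ∧ T.F^[n] x = T.F^[m] y

end TreeDyn

/-- The natural topology on the space of ends of a graph: the subspace
topology induced from the product of the (discrete) spaces of components
of complements of finite sets. -/
def endTop {V : Type} (G : SimpleGraph V) : TopologicalSpace G.end :=
  TopologicalSpace.induced Subtype.val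
    (⨅ K : (Finset V)ᵒᵖ, TopologicalSpace.induced (fun f => f K) ⊥)

/-- An end is isolated if it is an isolated point of the space of ends. -/
def IsIsolatedEnd {V : Type} (G : SimpleGraph V) (e : G.end) : Prop :=
  @IsOpen G.end (endTop G) {e}

namespace TreeDyn

variable {V : Type}

/-- `T` is polynomial-like with distinguished end `infty`:
(II) a local degree function exists, (I) `infty` is the unique isolated end,
(III) no vertex has valence one, and (IV) the grand orbit of every vertex
contains a vertex of valence at least three. -/
def IsPolyLike (T : TreeDyn V) (infty : T.G.end) : Prop :=
  (∃ dV dE, T.IsLocalDeg dV dE) ∧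
  IsIsolatedEnd T.G infty ∧
  (∀ e : T.G.end, IsIsolatedEnd T.G e → e = infty) ∧
  (∀ v : V, (T.G.neighborSet v).ncard ≠ 1) ∧
  (∀ v : V, ∃ w : V, T.GrandOrbit v w ∧ 3 ≤ (T.G.neighborSet w).ncard)

/-- The vertex `x` lies below the vertex `v` (the path from `x` to the
end `infty` passes through `v`): either `x = v`, or `x` and `infty`
determine different components of the complement of `{v}`. -/
def Below (T : TreeDyn V) (infty : T.G.end) (v x : V) : Prop :=
  x = v ∨ ∃ h : x ∉ (({v} : Finset V) : Set V),
    T.G.componentComplMk h ≠ infty.val (op ({v} : Finset V))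

/-- The end `p` lies below the vertex `v` (the path from `p` to `infty`
passes through `v`). -/
def EndBelow (T : TreeDyn V) (infty : T.G.end) (v : V) (p : T.G.end) : Prop :=
  p.val (op ({v} : Finset V)) ≠ infty.val (op ({v} : Finset V))

/-- `v₀` is the base of the tree: the vertex of valence ≥ 3 closest to
`infty`, i.e. every vertex of valence ≥ 3 lies below it. -/
def IsBase (T : TreeDyn V) (infty : T.G.end) (v₀ : V) : Prop :=
  3 ≤ (T.G.neighborSet v₀).ncard ∧
  ∀ w : V, 3 ≤ (T.G.neighborSet w).ncard → T.Below infty v₀ w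

open Classical in
/-- The combinatorial height relative to the base `v₀`: `|h v|` is the
graph distance to `v₀`, with `h v ≥ 0` exactly when `v` lies on the ray
from `v₀` to `infty` (i.e. `v₀` lies below `v`). -/
noncomputable def height (T : TreeDyn V) (infty : T.G.end) (v₀ : V) (v : V) : ℤ :=
  if T.Below infty v v₀ then (T.G.dist v₀ v : ℤ) else -(T.G.dist v₀ v : ℤ)

/-- `Dg` is the global degree of `T.F`: for every edge `{v,w}`, the sum of
the degrees of the edges mapping onto it equals `Dg`. -/
def IsGlobalDeg (T : TreeDyn V) (dE : V → V → ℕ) (Dg : ℕ) : Prop :=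
  ∀ ⦃v w : V⦄, T.G.Adj v w →
    Dg = ∑ᶠ a ∈ {a : V | T.F a = v}, ∑ᶠ b ∈ {b : V | T.G.Adj a b ∧ T.F b = w}, dE a b

/-- The critical multiplicity of a vertex. -/
noncomputable def multV (T : TreeDyn V) (dV : V → ℕ) (dE : V → V → ℕ) (v : V) : ℕ :=
  2 * dV v - 2 - ∑ᶠ w ∈ T.G.neighborSet v, (dE v w - 1)

/-- The critical multiplicity of an end `p ≠ infty`: the limiting
(= minimal) value of `dV` along the path from `infty` to `p`, minus one. -/
noncomputable def multEnd (T : TreeDyn V) (infty : T.G.end) (dV : V → ℕ) (p : T.G.end) : ℕ :=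
  sInf {d : ℕ | ∃ v : V, T.EndBelow infty v p ∧ dV v = d} - 1

/-- `μ` is the mass function: `μ v = 1` for `h(v) ≥ 0` and
`μ(F v) = (deg F / deg v) · μ v`. -/
def IsMass (T : TreeDyn V) (infty : T.G.end) (v₀ : V) (dV : V → ℕ) (Dg : ℕ)
    (μ : V → ℚ) : Prop :=
  (∀ v : V, 0 ≤ T.height infty v₀ v → μ v = 1) ∧
  (∀ v : V, μ (T.F v) = ((Dg : ℚ) / (dV v : ℚ)) * μ v)

end TreeDyn

namespace TreeDyn

variable {V : Type}

/-- The vertex `x` belongs to the component of the complement of `K` selected by the end `p`. -/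
def MemEnd {G : SimpleGraph V} (p : G.end) (K : Finset V) (x : V) : Prop :=
  ∃ h : x ∉ (K : Set V), G.componentComplMk h = p.val (op K)

theorem exists_memEnd {G : SimpleGraph V} (p : G.end) (K : Finset V) : ∃ x, MemEnd p K x :=
  ComponentCompl.exists_eq_mk (p.val (op K))

theorem MemEnd.mono {G : SimpleGraph V} {p : G.end} {K L : Finset V} {x : V}
    (hx : MemEnd p K x) (h : L ⊆ K) : MemEnd p L x := by
  obtain ⟨hx, e⟩ := hx
  exact ⟨_, (end_hom_mk_of_mk G p.2 (CategoryTheory.opHomOfLE h) hx e.symm).symm⟩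

theorem componentComplMk_eq_iff_dist_lt {G : SimpleGraph V} (hG : G.IsTree) {v w x : V}
    (hvw : G.Adj v w) (hx : x ∉ (({v} : Finset V) : Set V))
    (hw : w ∉ (({v} : Finset V) : Set V)) :
    G.componentComplMk hx = G.componentComplMk hw ↔ G.dist x w < G.dist x v := by
  classical
  constructor
  · intro h
    obtain ⟨q⟩ := ConnectedComponent.exact h
    obtain ⟨p, hp, hlen⟩ := hG.connected.exists_path_of_dist x v
    let r : G.Walk x w := q.map (Embedding.induce _).toHom
    have hr : v ∉ r.toPath.1.support := by
      intro hv
      have := r.support_toPath_subset_support hv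
      erw [Walk.support_map] at this
      obtain ⟨⟨y, hy⟩, -, e⟩ := List.mem_map.1 this
      exact hy (by simpa using e)
    have hc : (r.toPath.1.concat hvw.symm).IsPath := r.toPath.2.concat hr hvw.symm
    have := congrArg (fun z : G.Path x v => z.1.length)
      ((hG.isAcyclic.subsingleton_path x v).elim ⟨p, hp⟩ ⟨_, hc⟩)
    simp only [Walk.length_concat] at this
    have := G.dist_le r.toPath.1
    omega
  · intro h
    obtain ⟨p, hp, hlen⟩ := hG.connected.exists_path_of_dist x w
    have hv : v ∉ p.support := by
      intro hv
      have h1 := G.dist_le (p.takeUntil v hv)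
      have := p.length_takeUntil_le_length hv
      omega
    have : ∀ y ∈ p.support, y ∈ (({v} : Finset V) : Set V)ᶜ := by
      intro y hy hyv
      obtain rfl : y = v := by simpa using hyv
      exact hv hy
    exact ConnectedComponent.sound ⟨p.induce _ this⟩

variable (T : TreeDyn V) (infty : T.G.end)

theorem exists_adj_memEnd (v : V) : ∃ u, T.G.Adj v u ∧ MemEnd infty {v} u := by
  obtain ⟨x, hx, e⟩ := exists_memEnd infty {v}
  have hxv : x ≠ v := fun h => hx (by simp [h])
  obtain ⟨p, hp⟩ := T.isTree.connected.exists_walk_length_eq_dist v x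
  cases p with
  | nil => exact absurd rfl hxv
  | @cons _ u _ h q =>
    have hu : u ∉ ((({v} : Finset V)) : Set V) := by simpa using h.ne'
    have := T.G.dist_le q
    rw [Walk.length_cons] at hp
    have key := componentComplMk_eq_iff_dist_lt T.isTree h hx hu
    rw [T.G.dist_comm (u := x), T.G.dist_comm (u := x)] at key
    exact ⟨u, h, hu, (key.2 (by omega)).symm.trans e⟩

/-- The neighbour of `v` on the path from `v` to `infty`. -/
noncomputable def parent (v : V) : V := (T.exists_adj_memEnd infty v).choose

theorem adj_parent (v : V) : T.G.Adj v (T.parent infty v) :=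
  (T.exists_adj_memEnd infty v).choose_spec.1

theorem memEnd_parent (v : V) : MemEnd infty {v} (T.parent infty v) :=
  (T.exists_adj_memEnd infty v).choose_spec.2

theorem dist_lt_iff_memEnd {v w x : V} {K : Finset V} (hv : v ∈ K) (hx : MemEnd infty K x)
    (hvw : T.G.Adj v w) : T.G.dist x w < T.G.dist x v ↔ MemEnd infty {v} w := by
  obtain ⟨hx', e⟩ := hx.mono (Finset.singleton_subset_iff.2 hv)
  have hw : w ∉ ((({v} : Finset V)) : Set V) := by simpa using hvw.ne'
  rw [← componentComplMk_eq_iff_dist_lt T.isTree hvw hx' hw, e]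
  exact ⟨fun h => ⟨hw, h.symm⟩, fun ⟨_, h⟩ => h.symm⟩

theorem memEnd_singleton_iff {v w : V} (hvw : T.G.Adj v w) :
    MemEnd infty {v} w ↔ w = T.parent infty v := by
  refine ⟨fun h => ?_, fun h => h ▸ T.memEnd_parent infty v⟩
  have := (T.dist_lt_iff_memEnd infty (Finset.mem_singleton_self v) h
    (T.adj_parent infty v)).2 (T.memEnd_parent infty v)
  rw [dist_eq_one_iff_adj.2 hvw.symm, Nat.lt_one_iff] at this
  exact T.isTree.connected.dist_eq_zero_iff.1 this

theorem dist_lt_iff_eq_parent {v w x : V} {K : Finset V} (hv : v ∈ K) (hx : MemEnd infty K x)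
    (hvw : T.G.Adj v w) : T.G.dist x w < T.G.dist x v ↔ w = T.parent infty v := by
  rw [T.dist_lt_iff_memEnd infty hv hx hvw, T.memEnd_singleton_iff infty hvw]

theorem eq_parent_or_eq_parent {v w : V} (h : T.G.Adj v w) :
    w = T.parent infty v ∨ v = T.parent infty w := by
  classical
  obtain ⟨x, hx⟩ := exists_memEnd infty {v, w}
  rw [← T.dist_lt_iff_eq_parent infty (by simp) hx h,
    ← T.dist_lt_iff_eq_parent infty (by simp) hx h.symm]
  have := T.isTree.dist_eq_dist_add_one_of_adj x h
  omega

theorem parent_iterate_ne {v : V} {n : ℕ} (hn : n ≠ 0) : (T.parent infty)^[n] v ≠ v := by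
  classical
  obtain ⟨x, hx⟩ := exists_memEnd infty ((Finset.range n).image fun i => (T.parent infty)^[i] v)
  have key : ∀ i ≤ n, T.G.dist x ((T.parent infty)^[i] v) + i ≤ T.G.dist x v := by
    intro i
    induction i with
    | zero => simp
    | succ i ih =>
      intro hi
      have := (T.dist_lt_iff_eq_parent infty (v := (T.parent infty)^[i] v)
        (Finset.mem_image.2 ⟨i, by simpa using hi, rfl⟩) hx (T.adj_parent infty _)).2 rfl
      rw [iterate_succ_apply']
      have := ih (by omega)
      omega
  intro h
  have := key n le_rfl
  rw [h] at this
  omega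

theorem parent_iterate_injective (v : V) : Injective fun n => (T.parent infty)^[n] v := by
  intro m n
  wlog h : m ≤ n generalizing m n
  · intro e
    exact (this (by omega) e.symm).symm
  intro e
  by_contra hne
  refine T.parent_iterate_ne infty (v := (T.parent infty)^[m] v) (n := n - m) (by omega) ?_
  rw [← iterate_add_apply, Nat.sub_add_cancel h]
  exact e.symm

theorem exists_common_ancestor (v w : V) :
    ∃ i j, (T.parent infty)^[i] v = (T.parent infty)^[j] w := by
  obtain ⟨p⟩ := T.isTree.connected v w
  induction p with
  | nil => exact ⟨0, 0, rfl⟩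
  | @cons a b c h q ih =>
    obtain ⟨k, l, e⟩ := ih
    rcases T.eq_parent_or_eq_parent infty h with e' | e'
    · exact ⟨k + 1, l, by rw [iterate_succ_apply, ← e', e]⟩
    · exact ⟨k, l + 1, by
        rw [e', ← iterate_succ_apply (T.parent infty), iterate_succ_apply', e,
          ← iterate_succ_apply' (T.parent infty)]⟩

/-- If the ascending path from `x` of length `n` avoids `K`, its endpoints lie in the same
component of the complement of `K`. -/
theorem componentComplMk_parent_iterate {K : Set V} {x : V} {n : ℕ}
    (h : ∀ i ≤ n, (T.parent infty)^[i] x ∉ K) :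
    T.G.componentComplMk (h 0 (Nat.zero_le _)) = T.G.componentComplMk (h n le_rfl) := by
  induction n with
  | zero => rfl
  | succ n ih =>
    refine (ih fun i hi => h i (by omega)).trans (componentComplMk_eq_of_adj _ _ _ ?_)
    rw [iterate_succ_apply']
    exact T.adj_parent infty _

theorem below_iff {w x : V} : T.Below infty w x ↔ ∃ k, (T.parent infty)^[k] x = w := by
  classical
  constructor
  · rintro (rfl | ⟨hx, hne⟩)
    · exact ⟨0, rfl⟩
    by_contra! hno
    refine hne ?_
    obtain ⟨i, j, e⟩ := T.exists_common_ancestor infty x (T.parent infty w)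
    have h1 := T.componentComplMk_parent_iterate infty (K := (({w} : Finset V) : Set V)) (x := x)
      (n := i) fun k _ => by simpa using hno k
    have h2 := T.componentComplMk_parent_iterate infty (K := (({w} : Finset V) : Set V))
      (x := T.parent infty w) (n := j) fun k _ => by
        simpa using T.parent_iterate_ne infty (v := w) (n := k + 1) (by omega)
    obtain ⟨h3, h4⟩ := T.memEnd_parent infty w
    rw [← h4]
    simp only [e] at h1
    exact h1.trans h2.symm
  · intro h
    by_cases hxw : x = w
    · exact Or.inl hxw
    refine Or.inr ⟨by simpa using hxw, ?_⟩
    have h0 : Nat.find h ≠ 0 := by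
      intro h0
      have := Nat.find_spec h
      rw [h0] at this
      exact hxw this
    obtain ⟨k, hk⟩ := Nat.exists_eq_succ_of_ne_zero h0
    have hspec := Nat.find_spec h
    rw [hk, Nat.succ_eq_add_one, iterate_succ_apply'] at hspec
    have hmin : ∀ i ≤ k, (T.parent infty)^[i] x ∉ (({w} : Finset V) : Set V) := fun i hi => by
      simpa using Nat.find_min h (m := i) (by omega)
    have h1 := T.componentComplMk_parent_iterate infty hmin
    intro e
    have hmem : MemEnd infty {w} ((T.parent infty)^[k] x) := ⟨hmin k le_rfl, h1.symm.trans e⟩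
    have hadj := (T.adj_parent infty ((T.parent infty)^[k] x)).symm
    rw [hspec] at hadj
    rw [T.memEnd_singleton_iff infty hadj] at hmem
    refine T.parent_iterate_ne infty (v := w) (n := 2) (by omega) ?_
    rw [iterate_succ_apply, iterate_one, ← hmem, hspec]

theorem MemEnd.endBelow_iff {p : T.G.end} {K : Finset V} {v x : V} (hx : MemEnd p K x)
    (hv : v ∈ K) : T.EndBelow infty v p ↔ ∃ k, (T.parent infty)^[k] x = v := by
  rw [← below_iff]
  obtain ⟨h, e⟩ := hx.mono (Finset.singleton_subset_iff.2 hv)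
  have hxv : x ≠ v := by simpa using h
  simp only [EndBelow, Below, hxv, false_or, ← e]
  exact ⟨fun h' => ⟨h, h'⟩, fun h' => h'.2⟩

theorem EndBelow.parent {p : T.G.end} {v : V} (h : T.EndBelow infty v p) :
    T.EndBelow infty (T.parent infty v) p := by
  classical
  obtain ⟨x, hx⟩ := exists_memEnd p {v, T.parent infty v}
  rw [hx.endBelow_iff T infty (by simp)] at h ⊢
  obtain ⟨k, rfl⟩ := h
  exact ⟨k + 1, iterate_succ_apply' _ _ _⟩

theorem EndBelow.iterate {p : T.G.end} {v : V} (h : T.EndBelow infty v p) (n : ℕ) :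
    T.EndBelow infty ((T.parent infty)^[n] v) p := by
  induction n with
  | zero => exact h
  | succ n ih =>
    rw [iterate_succ_apply']
    exact ih.parent

theorem EndBelow.comparable {p : T.G.end} {v w : V} (hv : T.EndBelow infty v p)
    (hw : T.EndBelow infty w p) :
    (∃ k, (T.parent infty)^[k] v = w) ∨ ∃ k, (T.parent infty)^[k] w = v := by
  classical
  obtain ⟨x, hx⟩ := exists_memEnd p {v, w}
  rw [hx.endBelow_iff T infty (by simp)] at hv hw
  obtain ⟨k, rfl⟩ := hv
  obtain ⟨l, rfl⟩ := hw
  rcases le_total k l with h | h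
  · exact Or.inl ⟨l - k, by rw [← iterate_add_apply, Nat.sub_add_cancel h]⟩
  · exact Or.inr ⟨k - l, by rw [← iterate_add_apply, Nat.sub_add_cancel h]⟩

theorem EndBelow.eq_of_iterate_eq {p : T.G.end} {v w : V} {n : ℕ} (hv : T.EndBelow infty v p)
    (hw : T.EndBelow infty w p) (h : (T.parent infty)^[n] v = (T.parent infty)^[n] w) :
    v = w := by
  wlog hk : ∃ k, (T.parent infty)^[k] v = w generalizing v w
  · exact (this hw hv h.symm ((hv.comparable T infty hw).resolve_left hk)).symm
  obtain ⟨k, rfl⟩ := hk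
  rw [← iterate_add_apply] at h
  have := T.parent_iterate_injective infty v h
  obtain rfl : k = 0 := by omega
  rfl

theorem finite_children (w : V) : {c | T.parent infty c = w}.Finite :=
  (T.locFin w).subset fun c hc => by
    have := T.adj_parent infty c
    rw [hc] at this
    exact this.symm

theorem EndBelow.exists_child {p : T.G.end} {w : V} (h : T.EndBelow infty w p) :
    ∃ c, T.parent infty c = w ∧ T.EndBelow infty c p := by
  classical
  obtain ⟨x, hx⟩ := exists_memEnd p (insert w (T.finite_children infty w).toFinset)
  obtain ⟨k, hk⟩ := (hx.endBelow_iff T infty (by simp)).1 h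
  cases k with
  | zero => exact absurd (by simp [← hk]) hx.1
  | succ k =>
    rw [iterate_succ_apply'] at hk
    exact ⟨_, hk, (hx.endBelow_iff T infty (by simp [hk])).2 ⟨k, rfl⟩⟩

theorem EndBelow.exists_descendant {p : T.G.end} {w : V} (h : T.EndBelow infty w p) (n : ℕ) :
    ∃ c, (T.parent infty)^[n] c = w ∧ T.EndBelow infty c p := by
  induction n with
  | zero => exact ⟨w, rfl, h⟩
  | succ n ih =>
    obtain ⟨c, hc, hp⟩ := ih
    obtain ⟨d, rfl, hd⟩ := hp.exists_child
    exact ⟨d, hc, hd⟩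

/-- The component selected by an end outside `K` is determined by which vertices of a larger
finite set the end lies below. -/
theorem exists_finset_determining (K : Finset V) : ∃ L : Finset V, ∀ p q : T.G.end,
    (∀ v ∈ L, T.EndBelow infty v p ↔ T.EndBelow infty v q) → p.val (op K) = q.val (op K) := by
  classical
  refine ⟨K ∪ K.biUnion fun w => (T.finite_children infty w).toFinset, fun p q hpq => ?_⟩
  obtain ⟨x, hx⟩ := exists_memEnd p (K ∪ K.biUnion fun w => (T.finite_children infty w).toFinset)
  obtain ⟨y, hy⟩ := exists_memEnd q (K ∪ K.biUnion fun w => (T.finite_children infty w).toFinset)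
  have hxy : ∀ v ∈ K ∪ K.biUnion fun w => (T.finite_children infty w).toFinset,
      (∃ k, (T.parent infty)^[k] x = v) ↔ ∃ k, (T.parent infty)^[k] y = v := fun v hv => by
    rw [← hx.endBelow_iff T infty hv, ← hy.endBelow_iff T infty hv, hpq v hv]
  obtain ⟨hxK, ex⟩ := hx.mono Finset.subset_union_left
  obtain ⟨hyK, ey⟩ := hy.mono Finset.subset_union_left
  have hex : ∃ i j, (T.parent infty)^[j] y = (T.parent infty)^[i] x := by
    obtain ⟨i, j, e⟩ := T.exists_common_ancestor infty x y
    exact ⟨i, j, e.symm⟩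
  obtain ⟨j, hj⟩ := Nat.find_spec hex
  have hmin := fun a => @Nat.find_min _ _ hex a
  generalize Nat.find hex = i at hj hmin
  have hz : (T.parent infty)^[i] x ∉ K := by
    intro hz
    cases i with
    | zero => exact hxK hz
    | succ i =>
      refine hmin i (by omega) ((hxy _ (Finset.mem_union_right _ ?_)).1 ⟨i, rfl⟩)
      simp only [Finset.mem_biUnion, Set.Finite.mem_toFinset, Set.mem_ofPred_eq]
      exact ⟨_, hz, (iterate_succ_apply' _ _ _).symm⟩
  have h1 : ∀ a ≤ i, (T.parent infty)^[a] x ∉ (K : Set V) := by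
    intro a ha hK
    rcases ha.lt_or_eq with ha | rfl
    · exact hmin a ha ((hxy _ (Finset.mem_union_left _ hK)).1 ⟨a, rfl⟩)
    · exact hz hK
  have h2 : ∀ b ≤ j, (T.parent infty)^[b] y ∉ (K : Set V) := by
    intro b hb hK
    rcases hb.lt_or_eq with hb | rfl
    · obtain ⟨a, ha⟩ := (hxy _ (Finset.mem_union_left _ hK)).2 ⟨b, rfl⟩
      have hia : i ≤ a := by
        by_contra hlt
        exact hmin a (by omega) ⟨b, ha.symm⟩
      rw [← Nat.sub_add_cancel hia, iterate_add_apply, ← hj, ← iterate_add_apply] at ha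
      have := T.parent_iterate_injective infty y ha
      omega
    · exact hz (hj ▸ hK)
  have e1 := T.componentComplMk_parent_iterate infty h1
  have e2 := T.componentComplMk_parent_iterate infty h2
  simp only [hj] at e2
  rw [← ex, ← ey]
  exact e1.trans e2.symm

theorem end_ext {p q : T.G.end} (h : ∀ v, T.EndBelow infty v p ↔ T.EndBelow infty v q) :
    p = q := by
  apply Subtype.ext
  funext K
  obtain ⟨L, hL⟩ := T.exists_finset_determining infty K.unop
  exact hL p q fun v _ => h v

theorem exists_endBelow {p : T.G.end} (hp : p ≠ infty) : ∃ v, T.EndBelow infty v p := by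
  by_contra! h
  exact hp (T.end_ext infty fun v => ⟨fun h' => absurd h' (h v), fun h' => absurd rfl h'⟩)

/-- Every injective ray converges to an end. -/
theorem exists_end_of_ray {G : SimpleGraph V} {r : ℕ → V} (hr : Injective r)
    (hadj : ∀ n, G.Adj (r n) (r (n + 1))) :
    ∃ p : G.end, ∀ (K : Finset V) (n : ℕ), (∀ m ≥ n, r m ∉ K) → MemEnd p K (r n) := by
  classical
  have hN : ∀ K : Finset V, ∃ n, ∀ m ≥ n, r m ∉ K := by
    intro K
    have hf : (r ⁻¹' K).Finite := K.finite_toSet.preimage hr.injOn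
    obtain ⟨n, hn⟩ := hf.bddAbove
    exact ⟨n + 1, fun m hm h => by have := hn h; omega⟩
  choose N hN using hN
  have step : ∀ (K : Finset V) (n d : ℕ) (h : ∀ m ≥ n, r m ∉ (K : Set V)),
      G.componentComplMk (h n le_rfl) = G.componentComplMk (h (n + d) (by omega)) := by
    intro K n d h
    induction d with
    | zero => rfl
    | succ d ih => exact ih.trans (componentComplMk_eq_of_adj _ _ _ (hadj _))
  have key : ∀ (K : Finset V) (n m : ℕ) (hn : ∀ k ≥ n, r k ∉ (K : Set V))
      (hm : ∀ k ≥ m, r k ∉ (K : Set V)),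
      G.componentComplMk (hn n le_rfl) = G.componentComplMk (hm m le_rfl) := by
    intro K n m hn hm
    have h1 := step K n m hn
    have h2 := step K m n hm
    simp only [Nat.add_comm m n] at h2
    exact h1.trans h2.symm
  refine ⟨⟨fun K => G.componentComplMk (K := (K.unop : Set V)) (hN K.unop (N K.unop) le_rfl), ?_⟩,
    fun K n hn => ⟨hn n le_rfl, key K n (N K) hn (hN K)⟩⟩
  intro K L f
  have hLK : L.unop ⊆ K.unop := CategoryTheory.le_of_op_hom f
  exact key L.unop (N K.unop) (N L.unop) (fun k hk h => hN K.unop k hk (hLK h)) (hN L.unop)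

/-- A descending sequence of vertices determines an end below all of them. -/
theorem exists_end_of_descending {c : ℕ → V} (hc : ∀ n, T.parent infty (c (n + 1)) = c n) :
    ∃ p : T.G.end, ∀ n, T.EndBelow infty (c n) p := by
  have hit : ∀ n d, (T.parent infty)^[d] (c (n + d)) = c n := by
    intro n d
    induction d with
    | zero => rfl
    | succ d ih => rw [iterate_succ_apply, ← Nat.add_assoc, hc, ih]
  have hinj : ∀ n d, c (n + d) = c n → d = 0 := by
    intro n d h
    by_contra hd
    exact T.parent_iterate_ne infty hd ((hit n d).trans h.symm)
  have hinj : Injective c := by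
    intro n m h
    rcases le_total n m with h' | h'
    · obtain ⟨d, rfl⟩ := Nat.exists_eq_add_of_le h'
      rw [hinj n d h.symm, Nat.add_zero]
    · obtain ⟨d, rfl⟩ := Nat.exists_eq_add_of_le h'
      rw [hinj m d h, Nat.add_zero]
  obtain ⟨p, hp⟩ := exists_end_of_ray hinj fun n => by
    have := T.adj_parent infty (c (n + 1))
    rw [hc] at this
    exact this.symm
  refine ⟨p, fun n => ?_⟩
  have := hp {c n} (n + 1) fun m hm h => by
    have := hinj (Finset.mem_singleton.1 h)
    omega
  exact (this.endBelow_iff T infty (Finset.mem_singleton_self _)).2 ⟨1, hc n⟩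

end TreeDyn

namespace TreeDyn

variable {V : Type}

theorem isIsolatedEnd_iff {G : SimpleGraph V} {p : G.end} : IsIsolatedEnd G p ↔
    ∃ K : Finset V, ∀ q : G.end, q.val (op K) = p.val (op K) → q = p := by
  classical
  have hpi : ∀ t : Set (∀ K : (Finset V)ᵒᵖ, (componentComplFunctor G).obj K),
      @IsOpen _ (⨅ K : (Finset V)ᵒᵖ, TopologicalSpace.induced (fun f => f K) ⊥) t ↔ _ :=
    fun t => @isOpen_pi_iff _ _ (fun _ => ⊥) t
  unfold IsIsolatedEnd endTop
  refine Iff.trans (@isOpen_induced_iff _ _ (_) _ _) ⟨?_, ?_⟩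
  · rintro ⟨t, ht, htp⟩
    have hpt : p.val ∈ t := by
      have : p ∈ Subtype.val ⁻¹' t := htp ▸ rfl
      exact this
    obtain ⟨I, u, hu, hsub⟩ := (hpi t).1 ht p.val hpt
    refine ⟨I.biUnion fun K => K.unop, fun q hq => ?_⟩
    have : q ∈ Subtype.val ⁻¹' t := by
      refine hsub fun K hK => ?_
      have hle : K.unop ⊆ I.biUnion fun K => K.unop := fun a ha => Finset.mem_biUnion.2 ⟨K, hK, ha⟩
      have : q.val K = p.val K := by
        obtain ⟨x, hx⟩ := exists_memEnd q (I.biUnion fun K => K.unop)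
        have hx' : MemEnd p (I.biUnion fun K => K.unop) x := ⟨hx.1, hx.2.trans hq⟩
        exact (hx.mono hle).2.symm.trans (hx'.mono hle).2
      rw [this]
      exact (hu K hK).2
    rw [htp] at this
    exact this
  · rintro ⟨K, hK⟩
    refine ⟨{f | f (op K) = p.val (op K)}, ?_, ?_⟩
    · refine (hpi _).2 fun f hf => ⟨{op K}, fun L => {f L}, fun L _ => ⟨trivial, rfl⟩, ?_⟩
      intro g hg
      exact (hg (op K) (by simp)).trans hf
    · ext q
      refine ⟨fun h => hK q h, ?_⟩
      rintro rfl
      rfl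

variable (T : TreeDyn V) (infty : T.G.end)

theorem exists_descending (h1 : ∀ v, ∃ c, T.parent infty c = v) (v : V) :
    ∃ c : ℕ → V, c 0 = v ∧ ∀ n, T.parent infty (c (n + 1)) = c n := by
  choose f hf using h1
  exact ⟨fun n => f^[n] v, rfl, fun n => by simp only [iterate_succ_apply', hf]⟩

theorem IsPolyLike.exists_child {T : TreeDyn V} {infty : T.G.end} (hpl : T.IsPolyLike infty)
    (v : V) : ∃ c, T.parent infty c = v := by
  by_contra! h
  refine hpl.2.2.2.1 v (Set.ncard_eq_one.2 ⟨T.parent infty v, ?_⟩)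
  ext w
  refine ⟨fun hw => ?_, ?_⟩
  · exact (T.eq_parent_or_eq_parent infty hw).resolve_right fun e => h w e.symm
  · rintro rfl
    exact T.adj_parent infty v

theorem IsPolyLike.exists_end {T : TreeDyn V} {infty : T.G.end} (hpl : T.IsPolyLike infty)
    (v : V) : ∃ p, T.EndBelow infty v p := by
  obtain ⟨c, rfl, hc⟩ := T.exists_descending infty hpl.exists_child v
  obtain ⟨p, hp⟩ := T.exists_end_of_descending infty hc
  exact ⟨p, hp 0⟩

theorem exists_upper_bound [Nonempty V] (K : Finset V) :
    ∃ b, ∀ v ∈ K, ∃ k, (T.parent infty)^[k] v = b := by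
  classical
  induction K using Finset.induction_on with
  | empty => exact ⟨Classical.arbitrary V, by simp⟩
  | insert a K _ ih =>
    obtain ⟨b, hb⟩ := ih
    obtain ⟨i, j, e⟩ := T.exists_common_ancestor infty a b
    refine ⟨(T.parent infty)^[j] b, fun v hv => ?_⟩
    rcases Finset.mem_insert.1 hv with rfl | hv
    · exact ⟨i, e⟩
    · obtain ⟨k, hk⟩ := hb v hv
      exact ⟨j + k, by rw [iterate_add_apply, hk]⟩

/-- Near `infty` the tree is a ray: some vertex is comparable to all others. -/
theorem IsPolyLike.exists_comparable {T : TreeDyn V} {infty : T.G.end}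
    (hpl : T.IsPolyLike infty) :
    ∃ b, ∀ x, (∃ k, (T.parent infty)^[k] x = b) ∨ ∃ k, (T.parent infty)^[k] b = x := by
  obtain ⟨K, hK⟩ := isIsolatedEnd_iff.1 hpl.2.1
  obtain ⟨L, hL⟩ := T.exists_finset_determining infty K
  have : Nonempty V := T.isTree.connected.nonempty
  obtain ⟨b, hb⟩ := T.exists_upper_bound infty L
  refine ⟨b, fun x => ?_⟩
  obtain ⟨p, hp⟩ := hpl.exists_end x
  have : ∃ v ∈ L, T.EndBelow infty v p := by
    by_contra! h
    refine hp ?_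
    rw [hK p (hL p infty fun v hv => ⟨fun h' => absurd h' (h v hv), fun h' => absurd rfl h'⟩)]
  obtain ⟨v, hv, hvp⟩ := this
  obtain ⟨k, rfl⟩ := hb v hv
  exact hp.comparable T infty (hvp.iterate T infty k)

/-- Below every vertex the tree branches. -/
theorem IsPolyLike.exists_branching {T : TreeDyn V} {infty : T.G.end}
    (hpl : T.IsPolyLike infty) (v : V) :
    ∃ k c d, (T.parent infty)^[k + 1] c = v ∧ T.parent infty c = T.parent infty d ∧ c ≠ d := by
  by_contra! h
  obtain ⟨p, hp⟩ := hpl.exists_end v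
  have huniq : ∀ k c d, (T.parent infty)^[k] c = v → (T.parent infty)^[k] d = v → c = d := by
    intro k
    induction k with
    | zero => exact fun c d hc hd => Eq.trans hc hd.symm
    | succ k ih => exact fun c d hc hd => h k c d hc (ih _ _ hc hd)
  have hle : ∀ q r, T.EndBelow infty v q → T.EndBelow infty v r → ∀ w,
      T.EndBelow infty w q → T.EndBelow infty w r := by
    intro q r hq hr w hw
    rcases hq.comparable T infty hw with ⟨k, rfl⟩ | ⟨k, hk⟩
    · exact hr.iterate T infty k
    · obtain ⟨c, hc, hcr⟩ := hr.exists_descendant T infty k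
      rwa [huniq k w c hk hc]
  refine hp ?_
  rw [hpl.2.2.1 p (isIsolatedEnd_iff.2 ⟨{v}, fun q hq => ?_⟩)]
  have hqv : T.EndBelow infty v q := by
    unfold EndBelow at hp ⊢
    rwa [hq]
  exact T.end_ext infty fun w => ⟨hle q p hqv hp w, hle p q hp hqv w⟩

/-- The number of vertices over a given vertex is at most the global degree. -/
theorem IsGlobalDeg.card_le {T : TreeDyn V} {infty : T.G.end} {dV : V → ℕ} {dE : V → V → ℕ}
    {Dg : ℕ} (hDg : T.IsGlobalDeg dE Dg) (hdeg : T.IsLocalDeg dV dE) (y : V) (S : Finset V)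
    (hS : ∀ a ∈ S, T.F a = y) : S.card ≤ Dg := by
  classical
  have hy := T.adj_parent infty y
  have hpos : ∀ a, T.F a = y →
      1 ≤ ∑ᶠ b ∈ {b : V | T.G.Adj a b ∧ T.F b = T.parent infty y}, dE a b := by
    rintro a rfl
    obtain ⟨b, hab, hb⟩ := T.edgeSurj hy
    have hfin : {b : V | T.G.Adj a b ∧ T.F b = T.parent infty (T.F a)}.Finite :=
      (T.locFin a).subset fun b h => h.1
    rw [finsum_mem_eq_finite_toFinset_sum _ hfin]
    have hmem : b ∈ hfin.toFinset := by simp [hab, hb]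
    exact (hdeg.2.2.1 hab).trans_le
      (Finset.single_le_sum (f := fun b => dE a b) (fun _ _ => Nat.zero_le _) hmem)
  rw [hDg hy, finsum_mem_eq_finite_toFinset_sum _ (T.finFibers y)]
  calc S.card ≤ (T.finFibers y).toFinset.card :=
        Finset.card_le_card fun a ha => by simpa using hS a ha
    _ = ∑ a ∈ (T.finFibers y).toFinset, 1 := by simp
    _ ≤ _ := Finset.sum_le_sum fun a ha => hpos a (by simpa using ha)

/-- A subtree all of whose vertices map to the ray above `b` cannot exist: it would contain
arbitrarily many vertices with the same image. -/
theorem IsPolyLike.false_of_maps_to_ray {T : TreeDyn V} {infty : T.G.end}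
    (hpl : T.IsPolyLike infty) {dV : V → ℕ} {dE : V → V → ℕ} {Dg : ℕ}
    (hDg : T.IsGlobalDeg dE Dg) (hdeg : T.IsLocalDeg dV dE) {b s : V}
    (hS : ∀ k x, (T.parent infty)^[k] x = s → ∃ l, T.F x = (T.parent infty)^[l] b) : False := by
  classical
  have hone : ∀ k x, (T.parent infty)^[k] x = s → ∃ M, ∀ m ≥ M,
      ∃ j y, (T.parent infty)^[j] y = x ∧ T.F y = (T.parent infty)^[m] b := by
    intro k x hx
    obtain ⟨M, hM⟩ := hS k x hx
    refine ⟨M, fun m hm => ?_⟩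
    by_contra! hno
    have hlow : ∀ j y, (T.parent infty)^[j] y = x → ∃ l < m, T.F y = (T.parent infty)^[l] b := by
      intro j
      induction j with
      | zero =>
        rintro y rfl
        exact ⟨M, lt_of_le_of_ne hm (by rintro rfl; exact hno 0 _ rfl hM), hM⟩
      | succ j ih =>
        intro y hy
        obtain ⟨l, hl, e⟩ := ih _ hy
        obtain ⟨l', e'⟩ := hS (k + (j + 1)) y (by rw [iterate_add_apply, hy, hx])
        have hne : l' ≠ m := by
          rintro rfl
          exact hno _ y hy e'
        have hadj := T.adjMap (T.adj_parent infty y)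
        refine ⟨l', ?_, e'⟩
        rcases T.eq_parent_or_eq_parent infty hadj with h | h
        · rw [e, e', ← iterate_succ_apply' (T.parent infty)] at h
          have := T.parent_iterate_injective infty b h
          omega
        · rw [e, e', ← iterate_succ_apply' (T.parent infty)] at h
          have := T.parent_iterate_injective infty b h
          omega
    obtain ⟨c, hc0, hc⟩ := T.exists_descending infty hpl.exists_child x
    have hit : ∀ n, (T.parent infty)^[n] (c n) = x := by
      intro n
      induction n with
      | zero => exact hc0
      | succ n ih => rw [iterate_succ_apply, hc, ih]
    have hinj : Injective c := by
      intro n n' h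
      by_contra hne
      wlog hlt : n < n' generalizing n n'
      · exact this h.symm (Ne.symm hne) (by omega)
      have h2 := hit n'
      rw [← h, ← Nat.sub_add_cancel hlt.le, iterate_add_apply, hit n] at h2
      exact T.parent_iterate_ne infty (by omega) h2
    have hfin : (⋃ l ∈ Set.Iio m, {v | T.F v = (T.parent infty)^[l] b}).Finite :=
      (Set.finite_Iio m).biUnion fun l _ => T.finFibers _
    refine Set.infinite_of_injective_forall_mem hinj (fun n => ?_) hfin
    obtain ⟨l, hl, e⟩ := hlow n _ (hit n)
    exact Set.mem_biUnion (show l ∈ Set.Iio m from hl) e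
  have hmany : ∀ N k x, (T.parent infty)^[k] x = s → ∃ M, ∀ m ≥ M, ∃ A : Finset V,
      N ≤ A.card ∧ ∀ y ∈ A, T.F y = (T.parent infty)^[m] b ∧ ∃ j, (T.parent infty)^[j] y = x := by
    intro N
    induction N with
    | zero => exact fun k x _ => ⟨0, fun m _ => ⟨∅, by simp, by simp⟩⟩
    | succ N ih =>
      intro k x hx
      obtain ⟨i, c, d, hcx, hcd, hne⟩ := hpl.exists_branching (infty := infty) x
      have hdx : (T.parent infty)^[i + 1] d = x := by
        rw [iterate_succ_apply, ← hcd, ← iterate_succ_apply (T.parent infty), hcx]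
      obtain ⟨M₁, h₁⟩ := ih (k + (i + 1)) c (by rw [iterate_add_apply, hcx, hx])
      obtain ⟨M₂, h₂⟩ := hone (k + (i + 1)) d (by rw [iterate_add_apply, hdx, hx])
      refine ⟨max M₁ M₂, fun m hm => ?_⟩
      obtain ⟨A, hA, hAm⟩ := h₁ m (le_trans (le_max_left _ _) hm)
      obtain ⟨j, y, hy, hFy⟩ := h₂ m (le_trans (le_max_right _ _) hm)
      have hyA : y ∉ A := by
        intro hyA
        obtain ⟨-, j', hj'⟩ := hAm y hyA
        have e : (T.parent infty)^[j + 1] y = (T.parent infty)^[j' + 1] y := by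
          rw [iterate_succ_apply', iterate_succ_apply', hy, hj', hcd]
        have := T.parent_iterate_injective infty y e
        obtain rfl : j = j' := by omega
        exact hne (hj'.symm.trans hy)
      refine ⟨insert y A, by rw [Finset.card_insert_of_notMem hyA]; omega, fun z hz => ?_⟩
      rcases Finset.mem_insert.1 hz with rfl | hz
      · exact ⟨hFy, i + 1 + j, by rw [iterate_add_apply, hy, hdx]⟩
      · obtain ⟨h, j', hj'⟩ := hAm z hz
        exact ⟨h, i + 1 + j', by rw [iterate_add_apply, hj', hcx]⟩
  obtain ⟨M, hM⟩ := hmany (Dg + 1) 0 s rfl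
  obtain ⟨A, hA, hAm⟩ := hM M le_rfl
  have := hDg.card_le (infty := infty) hdeg _ A fun a ha => (hAm a ha).1
  omega

/-- The end `infty` is totally invariant, in local form. -/
theorem IsPolyLike.eq_parent_of_map_eq {T : TreeDyn V} {infty : T.G.end}
    (hpl : T.IsPolyLike infty) {dV : V → ℕ} {dE : V → V → ℕ} {Dg : ℕ}
    (hDg : T.IsGlobalDeg dE Dg) (hdeg : T.IsLocalDeg dV dE) {v w : V} (hvw : T.G.Adj v w)
    (h : T.F w = T.parent infty (T.F v)) : w = T.parent infty v := by
  classical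
  by_contra hne
  have hwv : T.parent infty w = v :=
    ((T.eq_parent_or_eq_parent infty hvw).resolve_left hne).symm
  have hlift : ∀ x, ∃ y, T.G.Adj x y ∧ T.F y = T.parent infty (T.F x) := fun x =>
    T.edgeSurj (T.adj_parent infty (T.F x))
  choose f hf hFf using hlift
  let r : ℕ → V := fun n => f^[n] w
  have hrs : ∀ n, r (n + 1) = f (r n) := fun n => iterate_succ_apply' _ _ _
  have hFr : ∀ n, T.F (r n) = (T.parent infty)^[n + 1] (T.F v) := by
    intro n
    induction n with
    | zero => exact h
    | succ n ih => rw [hrs, hFf, ih, ← iterate_succ_apply' (T.parent infty)]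
  have hstep : ∀ n, T.F (T.parent infty (r n)) = (T.parent infty)^[n] (T.F v) →
      T.parent infty (r (n + 1)) = r n := by
    intro n hFp
    rcases T.eq_parent_or_eq_parent infty (hf (r n)) with e | e
    · rw [← e, hFf, hFr, ← iterate_succ_apply' (T.parent infty)] at hFp
      have := T.parent_iterate_injective infty _ hFp
      omega
    · rw [hrs, ← e]
  have hdesc : ∀ n, T.parent infty (r (n + 1)) = r n := by
    intro n
    induction n with
    | zero => exact hstep 0 (congrArg T.F hwv)
    | succ n ih => exact hstep (n + 1) (by rw [ih, hFr])
  have hit : ∀ n, (T.parent infty)^[n] (r n) = w := by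
    intro n
    induction n with
    | zero => rfl
    | succ n ih => rw [iterate_succ_apply, hdesc, ih]
  obtain ⟨b, hb⟩ := hpl.exists_comparable
  have hbound : ∀ x, ∃ N, ∀ n k, (T.parent infty)^[k] x = r n → n ≤ N := by
    intro x
    by_cases hx : ∃ t, (T.parent infty)^[t] x = w
    · obtain ⟨t, ht⟩ := hx
      refine ⟨t, fun n k hk => ?_⟩
      have e : (T.parent infty)^[n + k] x = (T.parent infty)^[t] x := by
        rw [iterate_add_apply, hk, hit, ht]
      have := T.parent_iterate_injective infty x e
      omega
    · exact ⟨0, fun n k hk => absurd ⟨n + k, by rw [iterate_add_apply, hk, hit]⟩ hx⟩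
  choose N hN using hbound
  obtain ⟨i, j, hij⟩ := T.exists_common_ancestor infty (T.F v) b
  let n := i + (T.finFibers b).toFinset.sup N + 1
  refine hpl.false_of_maps_to_ray hDg hdeg (s := r n) (b := b) fun k x hx => ?_
  suffices ∃ l, T.F x = (T.parent infty)^[l + 1] b by
    obtain ⟨l, hl⟩ := this
    exact ⟨_, hl⟩
  induction k generalizing x with
  | zero =>
    obtain rfl : x = r n := hx
    refine ⟨n - i + j, ?_⟩
    rw [hFr, show n + 1 = (n - i + 1) + i by omega, iterate_add_apply, hij, ← iterate_add_apply]
    congr 1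
    omega
  | succ k ih =>
    obtain ⟨l, hl⟩ := ih _ hx
    have hxb : T.F x ≠ b := by
      intro e
      have h1 := hN x n (k + 1) hx
      have h2 : N x ≤ (T.finFibers b).toFinset.sup N :=
        Finset.le_sup (f := N) (by simpa using e)
      omega
    rcases T.eq_parent_or_eq_parent infty (T.adjMap (T.adj_parent infty x)) with e | e
    · rcases hb (T.F x) with ⟨a, ha⟩ | ⟨a, ha⟩
      · cases a with
        | zero => exact absurd ha hxb
        | succ a =>
          rw [iterate_succ_apply, ← e, hl, ← iterate_add_apply] at ha
          exact absurd ha (T.parent_iterate_ne infty (by omega))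
      · cases a with
        | zero => exact absurd ha.symm hxb
        | succ a => exact ⟨a, ha.symm⟩
    · exact ⟨l + 1, by rw [e, hl, ← iterate_succ_apply' (T.parent infty)]⟩

/-- The map commutes with passing to the parent. -/
theorem IsPolyLike.map_parent {T : TreeDyn V} {infty : T.G.end}
    (hpl : T.IsPolyLike infty) {dV : V → ℕ} {dE : V → V → ℕ} {Dg : ℕ}
    (hDg : T.IsGlobalDeg dE Dg) (hdeg : T.IsLocalDeg dV dE) (v : V) :
    T.F (T.parent infty v) = T.parent infty (T.F v) := by
  obtain ⟨w, hvw, hw⟩ := T.edgeSurj (T.adj_parent infty (T.F v))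
  rw [← hpl.eq_parent_of_map_eq hDg hdeg hvw hw, hw]

theorem IsPolyLike.dE_parent {T : TreeDyn V} {infty : T.G.end}
    (hpl : T.IsPolyLike infty) {dV : V → ℕ} {dE : V → V → ℕ} {Dg : ℕ}
    (hDg : T.IsGlobalDeg dE Dg) (hdeg : T.IsLocalDeg dV dE) (v : V) :
    dE v (T.parent infty v) = dV v := by
  have hset : {w | T.G.Adj v w ∧ T.F w = T.F (T.parent infty v)} = {T.parent infty v} := by
    ext w
    constructor
    · rintro ⟨hvw, hw⟩
      exact hpl.eq_parent_of_map_eq hDg hdeg hvw (hw.trans (hpl.map_parent hDg hdeg v))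
    · rintro rfl
      exact ⟨T.adj_parent infty v, rfl⟩
  rw [hdeg.2.2.2.2 (T.adj_parent infty v), hset, finsum_mem_singleton]

/-- Some vertex, and hence all its ancestors, has local degree equal to the global degree. -/
theorem IsPolyLike.exists_dV_eq {T : TreeDyn V} {infty : T.G.end}
    (hpl : T.IsPolyLike infty) {dV : V → ℕ} {dE : V → V → ℕ} {Dg : ℕ}
    (hDg : T.IsGlobalDeg dE Dg) (hdeg : T.IsLocalDeg dV dE) :
    ∃ z, ∀ j, dV ((T.parent infty)^[j] z) = Dg := by
  have : Nonempty V := T.isTree.connected.nonempty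
  have hFit : ∀ n v, T.F ((T.parent infty)^[n] v) = (T.parent infty)^[n] (T.F v) := fun n v =>
    (Semiconj.iterate_right (f := T.F) (hpl.map_parent hDg hdeg) n).eq v
  let y : V := T.F (Classical.arbitrary V)
  obtain ⟨b, hb⟩ := T.exists_upper_bound infty (T.finFibers y).toFinset
  have hb' : ∀ a, T.F a = y → ∃ k, (T.parent infty)^[k] a = b := fun a ha =>
    hb a (by simpa using ha)
  have hlift : ∀ n a, T.F a = (T.parent infty)^[n] y →
      ∃ c, T.F c = y ∧ (T.parent infty)^[n] c = a := by
    intro n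
    induction n with
    | zero => exact fun a ha => ⟨a, ha, rfl⟩
    | succ n ih =>
      intro a ha
      rw [iterate_succ_apply'] at ha
      obtain ⟨c, hac, hc⟩ := T.edgeSurj (v := a) (w' := (T.parent infty)^[n] y) (by
        rw [ha]
        exact (T.adj_parent infty _).symm)
      have := hpl.eq_parent_of_map_eq hDg hdeg hac.symm (by rw [ha, hc])
      obtain ⟨d, hd, rfl⟩ := ih c hc
      exact ⟨d, hd, by rw [iterate_succ_apply', ← this]⟩
  obtain ⟨k₀, hk₀⟩ := hb' _ rfl
  have hheight : ∀ a, T.F a = y → (T.parent infty)^[k₀] a = b := by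
    intro a ha
    obtain ⟨k, hk⟩ := hb' a ha
    have h1 := hFit k a
    have h2 := hFit k₀ (Classical.arbitrary V)
    rw [hk₀] at h2
    rw [hk, ha, h2] at h1
    rwa [T.parent_iterate_injective infty y h1]
  refine ⟨b, fun j => ?_⟩
  have hFz : T.F ((T.parent infty)^[j] b) = (T.parent infty)^[j + k₀] y := by
    rw [← hk₀, ← iterate_add_apply, hFit]
  have hfib : {a | T.F a = (T.parent infty)^[j + k₀] y} = {(T.parent infty)^[j] b} := by
    ext a
    constructor
    · intro ha
      obtain ⟨c, hc, rfl⟩ := hlift _ a ha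
      rw [iterate_add_apply, hheight c hc]
      rfl
    · rintro rfl
      exact hFz
  have hset : {w | T.G.Adj ((T.parent infty)^[j] b) w ∧
      T.F w = T.parent infty ((T.parent infty)^[j + k₀] y)} =
      {T.parent infty ((T.parent infty)^[j] b)} := by
    ext w
    constructor
    · rintro ⟨hvw, hw⟩
      exact hpl.eq_parent_of_map_eq hDg hdeg hvw (by rw [hw, hFz])
    · rintro rfl
      exact ⟨T.adj_parent infty _, by rw [hpl.map_parent hDg hdeg, hFz]⟩
  rw [hDg (T.adj_parent infty ((T.parent infty)^[j + k₀] y)), hfib, finsum_mem_singleton, hset,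
    finsum_mem_singleton, hpl.dE_parent hDg hdeg]

end TreeDyn

namespace TreeDyn

variable {V : Type} (T : TreeDyn V) (infty : T.G.end)

/-- The neighbours of `w` lying below it. -/
noncomputable def children (w : V) : Finset V := (T.finite_children infty w).toFinset

@[simp]
theorem mem_children {w c : V} : c ∈ T.children infty w ↔ T.parent infty c = w := by
  simp [children]

open Classical in
/-- The vertices `n` steps below `w`. -/
noncomputable def level (w : V) : ℕ → Finset V
  | 0 => {w}
  | n + 1 => (level w n).biUnion (T.children infty)

@[simp]
theorem mem_level {w x : V} {n : ℕ} : x ∈ T.level infty w n ↔ (T.parent infty)^[n] x = w := by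
  classical
  induction n generalizing x with
  | zero => simp [level]
  | succ n ih => simp [level, ih]

theorem sum_level_succ (w : V) (n : ℕ) (f : V → ℕ) :
    ∑ x ∈ T.level infty w (n + 1), f x =
      ∑ x ∈ T.level infty w n, ∑ c ∈ T.children infty x, f c := by
  classical
  rw [level, Finset.sum_biUnion]
  intro x _ y _ hxy
  rw [Function.onFun, Finset.disjoint_left]
  intro c hx hy
  exact hxy (((T.mem_children infty).1 hx).symm.trans ((T.mem_children infty).1 hy))

variable {T infty} {dV : V → ℕ} {dE : V → V → ℕ} {Dg : ℕ}

/-- The Riemann–Hurwitz formula at a vertex. -/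
theorem IsPolyLike.dV_sub_one_eq (hpl : T.IsPolyLike infty) (hDg : T.IsGlobalDeg dE Dg)
    (hdeg : T.IsLocalDeg dV dE) (w : V) :
    dV w - 1 = T.multV dV dE w + ∑ c ∈ T.children infty w, (dV c - 1) := by
  classical
  have hset : T.G.neighborSet w =
      (insert (T.parent infty w) (T.children infty w) : Finset V) := by
    ext x
    simp only [mem_neighborSet, Finset.coe_insert, Set.mem_insert_iff, Finset.mem_coe,
      mem_children]
    constructor
    · exact fun h => (T.eq_parent_or_eq_parent infty h).imp id Eq.symm
    · rintro (rfl | rfl)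
      · exact T.adj_parent infty w
      · exact (T.adj_parent infty x).symm
  have hnot : T.parent infty w ∉ T.children infty w := fun h =>
    T.parent_iterate_ne infty (v := w) (n := 2) (by omega) ((T.mem_children infty).1 h)
  have hsum : ∑ᶠ x ∈ T.G.neighborSet w, (dE w x - 1) =
      (dV w - 1) + ∑ c ∈ T.children infty w, (dV c - 1) := by
    rw [hset, finsum_mem_coe_finset, Finset.sum_insert hnot, hpl.dE_parent hDg hdeg]
    congr 1
    refine Finset.sum_congr rfl fun c hc => ?_
    rw [mem_children] at hc
    rw [hdeg.1, ← hc, hpl.dE_parent hDg hdeg]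
  have h1 := hdeg.2.2.2.1 w
  have h2 := hdeg.2.1 w
  unfold multV
  omega

theorem IsPolyLike.dV_le_dV_parent (hpl : T.IsPolyLike infty) (hDg : T.IsGlobalDeg dE Dg)
    (hdeg : T.IsLocalDeg dV dE) (c : V) : dV c ≤ dV (T.parent infty c) := by
  have h := hpl.dV_sub_one_eq hDg hdeg (T.parent infty c)
  have h1 := Finset.single_le_sum (f := fun c => dV c - 1) (fun _ _ => Nat.zero_le _)
    ((T.mem_children infty (w := T.parent infty c)).2 rfl)
  have := hdeg.2.1 (T.parent infty c)
  omega

theorem IsPolyLike.dV_le_dV_iterate (hpl : T.IsPolyLike infty) (hDg : T.IsGlobalDeg dE Dg)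
    (hdeg : T.IsLocalDeg dV dE) (n : ℕ) (c : V) : dV c ≤ dV ((T.parent infty)^[n] c) := by
  induction n with
  | zero => exact le_rfl
  | succ n ih =>
    rw [iterate_succ_apply']
    exact ih.trans (hpl.dV_le_dV_parent hDg hdeg _)

theorem IsPolyLike.dV_sub_one_eq_sum_level (hpl : T.IsPolyLike infty)
    (hDg : T.IsGlobalDeg dE Dg) (hdeg : T.IsLocalDeg dV dE) (w : V) (n : ℕ) :
    dV w - 1 = ∑ k ∈ Finset.range n, ∑ x ∈ T.level infty w k, T.multV dV dE x +
      ∑ x ∈ T.level infty w n, (dV x - 1) := by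
  induction n with
  | zero => simp [level]
  | succ n ih =>
    rw [ih, Finset.sum_range_succ, sum_level_succ, add_assoc, ← Finset.sum_add_distrib]
    congr 1
    exact Finset.sum_congr rfl fun x _ => hpl.dV_sub_one_eq hDg hdeg x

/-- If natural numbers `f c` have sum at most `D` and sum of squares equal to `D ^ 2`, then
at most one of them is nonzero and it equals `D`. -/
theorem eq_of_sum_sq_eq {ι : Type} {s : Finset ι} {f : ι → ℕ} {m D : ℕ}
    (hD : D = m + ∑ c ∈ s, f c) (hsq : ∑ c ∈ s, f c ^ 2 = D ^ 2) :
    m = 0 ∧ (D ≠ 0 → ∃ c ∈ s, f c = D ∧ ∀ d ∈ s, d ≠ c → f d = 0) := by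
  classical
  rcases Nat.eq_zero_or_pos D with h0 | hpos
  · exact ⟨by omega, fun h => absurd h0 h⟩
  have hle : ∀ c ∈ s, f c ≤ D := fun c hc => by
    have := Finset.single_le_sum (f := f) (fun _ _ => Nat.zero_le _) hc
    omega
  have hterm : ∀ c ∈ s, f c ^ 2 ≤ f c * D := fun c hc => by
    rw [sq]
    exact Nat.mul_le_mul_left _ (hle c hc)
  have h1 : D ^ 2 ≤ (∑ c ∈ s, f c) * D := by
    rw [← hsq, Finset.sum_mul]
    exact Finset.sum_le_sum hterm
  have hDs : D ≤ ∑ c ∈ s, f c := by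
    rw [sq] at h1
    exact Nat.le_of_mul_le_mul_right h1 hpos
  have hs : ∑ c ∈ s, f c = D := by omega
  have heq : ∀ c ∈ s, f c ^ 2 = f c * D := by
    refine (Finset.sum_eq_sum_iff_of_le hterm).1 ?_
    rw [hsq, ← Finset.sum_mul, hs, sq]
  refine ⟨by omega, fun _ => ?_⟩
  obtain ⟨c, hc, hfc⟩ := Finset.exists_ne_zero_of_sum_ne_zero (hs.trans_ne hpos.ne')
  have hfD : f c = D := by
    have := heq c hc
    rw [sq] at this
    exact Nat.eq_of_mul_eq_mul_left (Nat.pos_of_ne_zero hfc) this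
  refine ⟨c, hc, hfD, fun d hd hdc => ?_⟩
  rw [← Finset.add_sum_erase s f hc] at hs
  have := Finset.single_le_sum (f := f) (fun _ _ => Nat.zero_le _)
    (Finset.mem_erase.2 ⟨hdc, hd⟩)
  omega

/-- Sufficiently far below `w` no vertex is critical, and each vertex of local degree greater
than one has exactly one child of local degree greater than one, of the same local degree. -/
theorem IsPolyLike.exists_stable_level (hpl : T.IsPolyLike infty) (hDg : T.IsGlobalDeg dE Dg)
    (hdeg : T.IsLocalDeg dV dE) (w : V) :
    ∃ N, ∀ n ≥ N, ∀ x, (T.parent infty)^[n] x = w → T.multV dV dE x = 0 ∧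
      (dV x - 1 ≠ 0 → ∃ c, T.parent infty c = x ∧ dV c - 1 = dV x - 1 ∧
        ∀ d, T.parent infty d = x → d ≠ c → dV d - 1 = 0) := by
  have hle : ∀ x, ∑ c ∈ T.children infty x, (dV c - 1) ^ 2 ≤ (dV x - 1) ^ 2 := by
    intro x
    refine (Finset.sum_sq_le_sq_sum_of_nonneg fun _ _ => Nat.zero_le _).trans ?_
    have := hpl.dV_sub_one_eq hDg hdeg x
    exact Nat.pow_le_pow_left (by omega) 2
  let Q : ℕ → ℕ := fun n => ∑ x ∈ T.level infty w n, (dV x - 1) ^ 2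
  have hQs : ∀ n, Q (n + 1) = ∑ x ∈ T.level infty w n, ∑ c ∈ T.children infty x, (dV c - 1) ^ 2 :=
    fun n => T.sum_level_succ infty w n _
  have hQ : Antitone Q := antitone_nat_of_succ_le fun n => by
    rw [hQs]
    exact Finset.sum_le_sum fun x _ => hle x
  obtain ⟨N, hN⟩ := WellFoundedLT.antitone_chain_condition hQ
  refine ⟨N, fun n hn x hx => ?_⟩
  have heq : Q (n + 1) = Q n := (hN (n + 1) (by omega)).symm.trans (hN n hn)
  rw [hQs] at heq
  have hx' := (Finset.sum_eq_sum_iff_of_le fun x _ => hle x).1 heq x ((T.mem_level infty).2 hx)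
  have := eq_of_sum_sq_eq (hpl.dV_sub_one_eq hDg hdeg x) hx'
  simpa only [mem_children] using this

theorem multEnd_le {p : T.G.end} {v : V} (h : T.EndBelow infty v p) :
    T.multEnd infty dV p ≤ dV v - 1 :=
  Nat.sub_le_sub_right (Nat.sInf_le (s := {d | ∃ v, T.EndBelow infty v p ∧ dV v = d}) ⟨v, h, rfl⟩) 1

/-- The edge above `w` has degree one plus the number of critical points below `w`. -/
theorem IsPolyLike.dV_sub_one_eq_finsum (hpl : T.IsPolyLike infty) (hDg : T.IsGlobalDeg dE Dg)
    (hdeg : T.IsLocalDeg dV dE) (w : V) :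
    dV w - 1 = (∑ᶠ x ∈ {x : V | T.Below infty w x}, T.multV dV dE x) +
        ∑ᶠ p ∈ {p : T.G.end | T.EndBelow infty w p}, T.multEnd infty dV p := by
  classical
  obtain ⟨N, hN⟩ := hpl.exists_stable_level hDg hdeg w
  rw [hpl.dV_sub_one_eq_sum_level hDg hdeg w N]
  congr 1
  · rw [← Finset.sum_biUnion]
    · symm
      apply finsum_mem_eq_sum_of_inter_support_eq
      ext x
      simp only [Set.mem_inter_iff, Set.mem_ofPred_eq, Function.mem_support, Finset.coe_biUnion,
        Finset.mem_coe, Finset.mem_range, Set.mem_iUnion, mem_level, below_iff, exists_prop]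
      refine and_congr_left fun hx => ⟨?_, ?_⟩
      · rintro ⟨k, hk⟩
        refine ⟨k, ?_, hk⟩
        by_contra hkN
        exact hx (hN k (by omega) x hk).1
      · rintro ⟨k, -, hk⟩
        exact ⟨k, hk⟩
    · intro k _ l _ hkl
      rw [Function.onFun, Finset.disjoint_left]
      intro x hk hl
      rw [mem_level] at hk hl
      exact hkl (T.parent_iterate_injective infty x (hk.trans hl.symm))
  · have hcover : ∀ x : V, ∃ c : ℕ → V, (T.parent infty)^[N] x = w → dV x - 1 ≠ 0 →
        c 0 = x ∧ ∀ n, T.parent infty (c (n + 1)) = c n ∧ dV (c n) - 1 = dV x - 1 ∧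
          ∀ y, (T.parent infty)^[n] y = x → dV y - 1 ≠ 0 → y = c n := by
      intro x
      by_cases hx : (T.parent infty)^[N] x = w ∧ dV x - 1 ≠ 0
      swap
      · exact ⟨fun _ => x, fun h h' => absurd ⟨h, h'⟩ hx⟩
      have hstep : ∀ y : V, ∃ c, (∃ n ≥ N, (T.parent infty)^[n] y = w) → dV y - 1 ≠ 0 →
          T.parent infty c = y ∧ dV c - 1 = dV y - 1 ∧
            ∀ d, T.parent infty d = y → d ≠ c → dV d - 1 = 0 := by
        intro y
        by_cases hy : (∃ n ≥ N, (T.parent infty)^[n] y = w) ∧ dV y - 1 ≠ 0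
        · obtain ⟨⟨n, hn, hyn⟩, hy⟩ := hy
          obtain ⟨c, hc⟩ := (hN n hn y hyn).2 hy
          exact ⟨c, fun _ _ => hc⟩
        · exact ⟨y, fun h h' => absurd ⟨h, h'⟩ hy⟩
      choose f hf using hstep
      have hinv : ∀ n, (T.parent infty)^[N + n] (f^[n] x) = w ∧ dV (f^[n] x) - 1 = dV x - 1 ∧
          ∀ y, (T.parent infty)^[n] y = x → dV y - 1 ≠ 0 → y = f^[n] x := by
        intro n
        induction n with
        | zero => exact ⟨hx.1, rfl, fun y hy _ => hy⟩
        | succ n ih =>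
          obtain ⟨h1, h2, h3⟩ := ih
          obtain ⟨g1, g2, g3⟩ := hf (f^[n] x) ⟨N + n, by omega, h1⟩ (by rw [h2]; exact hx.2)
          rw [iterate_succ_apply' f]
          refine ⟨?_, g2.trans h2, fun y hy hy0 => ?_⟩
          · rw [← Nat.add_assoc, iterate_succ_apply, g1, h1]
          · by_contra hne
            refine hy0 (g3 y (h3 _ hy ?_) hne)
            have := hpl.dV_le_dV_parent hDg hdeg y
            omega
      refine ⟨fun n => f^[n] x, fun _ _ => ⟨rfl, fun n => ⟨?_, (hinv n).2⟩⟩⟩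
      simp only [iterate_succ_apply' f]
      exact (hf _ ⟨N + n, by omega, (hinv n).1⟩ (by rw [(hinv n).2.1]; exact hx.2)).1
    have hend : ∀ x : V, ∃ p : T.G.end, (T.parent infty)^[N] x = w → dV x - 1 ≠ 0 →
        T.EndBelow infty x p ∧ T.multEnd infty dV p = dV x - 1 ∧
          ∀ q, T.EndBelow infty x q → T.multEnd infty dV q ≠ 0 → q = p := by
      intro x
      by_cases hx : (T.parent infty)^[N] x = w ∧ dV x - 1 ≠ 0
      swap
      · exact ⟨infty, fun h h' => absurd ⟨h, h'⟩ hx⟩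
      obtain ⟨c, hc⟩ := hcover x
      obtain ⟨hc0, hc⟩ := hc hx.1 hx.2
      obtain ⟨p, hp⟩ := T.exists_end_of_descending infty fun n => (hc n).1
      have hit : ∀ n, (T.parent infty)^[n] (c n) = x := by
        intro n
        induction n with
        | zero => exact hc0
        | succ n ih => rw [iterate_succ_apply, (hc n).1, ih]
      have hxp : T.EndBelow infty x p := hc0 ▸ hp 0
      have hunder : ∀ q, T.EndBelow infty x q → (∀ n, T.EndBelow infty (c n) q) → ∀ v,
          T.EndBelow infty v q → (∃ k, (T.parent infty)^[k] x = v) ∨ ∃ n, v = c n := by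
        intro q hxq hq v hv
        refine (hxq.comparable T infty hv).imp id ?_
        rintro ⟨k, hk⟩
        exact ⟨k, hv.eq_of_iterate_eq T infty (hq k) (hk.trans (hit k).symm)⟩
      have htransfer : ∀ q r, T.EndBelow infty x q → (∀ n, T.EndBelow infty (c n) q) →
          T.EndBelow infty x r → (∀ n, T.EndBelow infty (c n) r) → ∀ v,
          T.EndBelow infty v q → T.EndBelow infty v r := by
        intro q r hxq hq hxr hr v hv
        rcases hunder q hxq hq v hv with ⟨k, rfl⟩ | ⟨n, rfl⟩
        · exact hxr.iterate T infty k
        · exact hr n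
      refine ⟨p, fun _ _ => ⟨hxp, le_antisymm (multEnd_le hxp) ?_, fun q hxq hq0 => ?_⟩⟩
      · refine Nat.sub_le_sub_right
          (le_csInf (s := {d | ∃ v, T.EndBelow infty v p ∧ dV v = d}) ⟨_, x, hxp, rfl⟩ ?_) 1
        rintro _ ⟨v, hv, rfl⟩
        rcases hunder p hxp hp v hv with ⟨k, rfl⟩ | ⟨n, rfl⟩
        · exact hpl.dV_le_dV_iterate hDg hdeg k x
        · have := (hc n).2.1
          have := hdeg.2.1 (c n)
          omega
      · have hq : ∀ n, T.EndBelow infty (c n) q := by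
          intro n
          obtain ⟨y, hy, hyq⟩ := hxq.exists_descendant T infty n
          have := multEnd_le (dV := dV) hyq
          rwa [← (hc n).2.2 y hy (by omega)]
        exact T.end_ext infty fun v =>
          ⟨htransfer q p hxq hq hxp hp v, htransfer p q hxp hp hxq hq v⟩
    choose P hP using hend
    rw [← Finset.sum_filter_ne_zero, ← finsum_mem_coe_finset,
      ← finsum_mem_inter_support (fun p => T.multEnd infty dV p)]
    have hmem : ∀ x, x ∈ (((T.level infty w N).filter fun x => dV x - 1 ≠ 0 : Finset V) : Set V) ↔
        (T.parent infty)^[N] x = w ∧ dV x - 1 ≠ 0 := by simp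
    refine finsum_mem_eq_of_bijOn P ⟨?_, ?_, ?_⟩ ?_
    · intro x hx
      obtain ⟨hx, hx0⟩ := (hmem x).1 hx
      obtain ⟨h1, h2, -⟩ := hP x hx hx0
      refine ⟨?_, ?_⟩
      · have := h1.iterate T infty N
        rwa [hx] at this
      · rw [Function.mem_support, h2]
        exact hx0
    · intro x hx y hy hxy
      obtain ⟨hx, hx0⟩ := (hmem x).1 hx
      obtain ⟨hy, hy0⟩ := (hmem y).1 hy
      have h1 := (hP x hx hx0).1
      have h2 := (hP y hy hy0).1
      rw [← hxy] at h2
      exact h1.eq_of_iterate_eq T infty h2 (hx.trans hy.symm)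
    · rintro p ⟨hp, hp0⟩
      obtain ⟨x, hx, hxp⟩ := EndBelow.exists_descendant T infty hp N
      have hx0 : dV x - 1 ≠ 0 := by
        have := multEnd_le (dV := dV) hxp
        rw [Function.mem_support] at hp0
        omega
      exact ⟨x, (hmem x).2 ⟨hx, hx0⟩, ((hP x hx hx0).2.2 p hxp hp0).symm⟩
    · intro x hx
      obtain ⟨hx, hx0⟩ := (hmem x).1 hx
      exact (hP x hx hx0).2.1.symm

/-- All critical points lie below any vertex `z` such that `z` and all its ancestors have the
same local degree. -/
theorem IsPolyLike.below_of_mult_ne_zero (hpl : T.IsPolyLike infty) (hDg : T.IsGlobalDeg dE Dg)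
    (hdeg : T.IsLocalDeg dV dE) {z : V} (hz : ∀ j, dV ((T.parent infty)^[j] z) = dV z) :
    (∀ x, T.multV dV dE x ≠ 0 → T.Below infty z x) ∧
      ∀ p ≠ infty, T.multEnd infty dV p ≠ 0 → T.EndBelow infty z p := by
  classical
  have key : ∀ j, ∑ k ∈ Finset.range j,
      ∑ x ∈ T.level infty ((T.parent infty)^[j] z) k, T.multV dV dE x = 0 ∧
      ∀ x, (T.parent infty)^[j] x = (T.parent infty)^[j] z → x ≠ z → dV x - 1 = 0 := by
    intro j
    have h := hpl.dV_sub_one_eq_sum_level hDg hdeg ((T.parent infty)^[j] z) j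
    rw [hz, ← Finset.add_sum_erase _ _ ((T.mem_level infty (x := z)).2 rfl)] at h
    refine ⟨by omega, fun x hx hxz => ?_⟩
    have := Finset.single_le_sum (f := fun x => dV x - 1) (fun _ _ => Nat.zero_le _)
      (Finset.mem_erase.2 ⟨hxz, (T.mem_level infty).2 hx⟩)
    omega
  refine ⟨fun x hx => ?_, fun p hp hp0 => ?_⟩
  · obtain ⟨i, j, e⟩ := T.exists_common_ancestor infty x z
    rw [below_iff]
    rcases lt_or_ge i j with hij | hij
    · have h1 := Finset.sum_eq_zero_iff.1 (key j).1 i (Finset.mem_range.2 hij)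
      exact absurd (Finset.sum_eq_zero_iff.1 h1 x ((T.mem_level infty).2 e)) hx
    · refine ⟨i - j, ?_⟩
      by_contra hne
      have h1 := (key j).2 _ (by rw [← iterate_add_apply, Nat.add_sub_cancel' hij, e]) hne
      have h2 := hpl.dV_le_dV_iterate hDg hdeg (i - j) x
      have h3 := hpl.dV_sub_one_eq hDg hdeg x
      omega
  · obtain ⟨v, hv⟩ := T.exists_endBelow infty hp
    obtain ⟨i, j, e⟩ := T.exists_common_ancestor infty v z
    have h1 := hv.iterate T infty i
    rw [e] at h1
    obtain ⟨x, hx, hxp⟩ := h1.exists_descendant T infty j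
    by_contra hne
    have h2 := (key j).2 x hx (by rintro rfl; exact hne hxp)
    have := multEnd_le (dV := dV) hxp
    omega

end TreeDyn

/-- **Counting critical points.**
Let `F : T → T` be a polynomial-like branched covering with local degree
function `(dV, dE)` and global degree `Dg`.  Then
(a) the total number of critical points of `F` counted with multiplicity is
`Dg − 1`: the sum of the critical multiplicities of all vertices plus the sum
of the critical multiplicities of all ends other than `infty` equals `Dg − 1`;
(b) the degree of any edge is one more than the number of critical points
below it, counted with multiplicity: for an edge `{v,w}` with lower endpoint
`w`, `dE v w` equals `1` plus the sum of the multiplicities of all vertices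
and ends below `w`. -/
theorem critical_point_count
    {V : Type} (T : TreeDyn V) (infty : T.G.end)
    (hpl : T.IsPolyLike infty)
    (dV : V → ℕ) (dE : V → V → ℕ) (hdeg : T.IsLocalDeg dV dE)
    (Dg : ℕ) (hDg : T.IsGlobalDeg dE Dg) :
    ((∑ᶠ v : V, T.multV dV dE v) +
        (∑ᶠ p ∈ {p : T.G.end | p ≠ infty}, T.multEnd infty dV p) = Dg - 1) ∧
    (∀ v w : V, T.G.Adj v w → T.Below infty v w →
      dE v w = 1 + ((∑ᶠ x ∈ {x : V | T.Below infty w x}, T.multV dV dE x) +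
        ∑ᶠ p ∈ {p : T.G.end | T.EndBelow infty w p}, T.multEnd infty dV p)) := by
  constructor
  · obtain ⟨z, hz⟩ := hpl.exists_dV_eq hDg hdeg
    have hzD : dV z = Dg := hz 0
    obtain ⟨hV, hE⟩ := hpl.below_of_mult_ne_zero hDg hdeg fun j => (hz j).trans hzD.symm
    rw [← hzD, hpl.dV_sub_one_eq_finsum hDg hdeg z, ← finsum_mem_univ]
    congr 1
    · exact finsum_mem_inter_support_eq' _ _ _ fun x hx => ⟨fun _ => hV x hx, fun _ => trivial⟩
    · refine finsum_mem_inter_support_eq' _ _ _ fun p hp => ⟨fun h => hE p h hp, ?_⟩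
      rintro h rfl
      exact h rfl
  · intro v w hvw hbelow
    rw [← hpl.dV_sub_one_eq_finsum hDg hdeg w]
    have hpos := hdeg.2.1 w
    obtain ⟨k, rfl⟩ := (T.below_iff infty).1 hbelow
    have hdE : dE ((T.parent infty)^[k] w) w = dV w := by
      rcases T.eq_parent_or_eq_parent infty hvw with h | h
      · rw [← iterate_succ_apply' (T.parent infty)] at h
        exact absurd h.symm (T.parent_iterate_ne infty k.succ_ne_zero)
      · rw [h, hdeg.1, hpl.dE_parent hDg hdeg]
    omega
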